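/- There exists a constant C > 0 and, for every r ≥ 1 and every ball B_r ⊂ ℝ³ of radius r, a measurable weight W_{B_r} : ℝ³ → (0,∞) with W_{B_r} ≥ 1 on B_r and W_{B_r}(x) ≤ C (1 + dist(x, B_r)/r)^{−100} for all x, such that the following trilinear restriction estimate holds. Let s > 0 with r ≥ 10 s ≥ 10, let I₁, I₂, I₃ ⊂ [0,1] be intervals that are pairwise separated by at least s^{−1}, and for i = 1,2,3 let f_i : ℝ³ → ℂ be a Schwartz function whose Fourier transform is supported in {(t, t² + ω₂, t³ + ω₃) : t ∈ I_i, |(ω₂,ω₃)| ≤ r^{−1}}. Then ∫_{B_r} |f₁ f₂ f₃|² ≤ C s³ |B_r|^{−2} ∏_{i=1}^3 ∫_{ℝ³} |f_i|² W_{B_r}. -/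

import Mathlib

open MeasureTheory Real Complex Set Finset
open scoped FourierTransform

noncomputable section

abbrev R3 : Type := EuclideanSpace ℝ (Fin 3)

/-- The vertical `r⁻¹`-neighborhood of the arc of the moment curve over the interval `I`:
`{γ(t) + (0,ω₂,ω₃) : t ∈ I, |(ω₂,ω₃)| ≤ r⁻¹}` where `γ(t) = (t,t²,t³)`. -/
def momNbhd (I : Set ℝ) (r : ℝ) : Set R3 :=
  {ξ | ξ 0 ∈ I ∧ (ξ 1 - (ξ 0)^2)^2 + (ξ 2 - (ξ 0)^3)^2 ≤ (r⁻¹)^2}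

/-!
By Plancherel and Cauchy–Schwarz, `∫ |f₀ f₁ f₂|²` is at most `∏ i, ∫ |fᵢ|²` times the largest
measure of a set `{(ξ₀, ξ₁) | ξ₀ ∈ N 0, ξ₁ ∈ N 1, ξ - ξ₀ - ξ₁ ∈ N 2}`, where `N i` contains the
Fourier support of `fᵢ`. When the `N i` are tubes of width `δ` around separated arcs of the moment
curve, the first coordinates of the three summands have a prescribed sum, and their sums of squares
and of cubes are prescribed up to `O(δ)`. By Newton's identities these power sums determine the
coordinates, and their Jacobian is a Vandermonde determinant, bounded below by the cube of the
separation; changing variables bounds the measure by a multiple of `s³ δ⁶`, and `δ ~ r⁻¹`.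

To localize to a ball of radius `r`, multiply each `fᵢ` by a Schwartz function that is at least `1`
on the ball and whose Fourier transform is supported in a ball of radius `r⁻¹ / 4`: this only
thickens the tubes by a constant factor, and the decay of the cutoff gives the weight.
-/

open SchwartzMap Function Metric
open scoped SchwartzMap ENNReal Pointwise

section Measure

lemma sq_lintegral_le_measure_mul_lintegral_sq {α : Type*} [MeasurableSpace α] {μ : Measure α}
    {f : α → ℝ≥0∞} (hf : AEMeasurable f μ) {s : Set α} (hs : support f ⊆ s) :
    (∫⁻ x, f x ∂μ) ^ 2 ≤ μ s * ∫⁻ x, f x ^ 2 ∂μ := by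
  have sq_rpow_half (a : ℝ≥0∞) : (a ^ (1 / 2 : ℝ)) ^ 2 = a := by
    rw [← ENNReal.rpow_natCast, ← ENNReal.rpow_mul]
    norm_num
  have holder := ENNReal.lintegral_mul_le_Lp_mul_Lq (μ.restrict s) Real.HolderConjugate.two_two
    hf.restrict (aemeasurable_const (b := 1))
  simp only [Pi.mul_apply, mul_one, ENNReal.rpow_ofNat, one_pow, setLIntegral_one,
    setLIntegral_eq_of_support_subset hs] at holder
  calc (∫⁻ x, f x ∂μ) ^ 2
      ≤ ((∫⁻ x in s, f x ^ 2 ∂μ) ^ (1 / 2 : ℝ) * μ s ^ (1 / 2 : ℝ)) ^ 2 := by gcongr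
    _ = μ s * ∫⁻ x in s, f x ^ 2 ∂μ := by rw [mul_pow, sq_rpow_half, sq_rpow_half, mul_comm]
    _ ≤ μ s * ∫⁻ x, f x ^ 2 ∂μ := by gcongr; exact Measure.restrict_le_self

lemma ofReal_mul_measure_le_measure_image_of_le_abs_det {E : Type*} [NormedAddCommGroup E]
    [NormedSpace ℝ E] [FiniteDimensional ℝ E] [MeasurableSpace E] [BorelSpace E]
    (μ : Measure E) [μ.IsAddHaarMeasure] {s : Set E} (hs : MeasurableSet s) {f : E → E}
    {f' : E → E →L[ℝ] E} (hf' : ∀ x ∈ s, HasFDerivWithinAt f (f' x) s x) (hf : InjOn f s) {c : ℝ}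
    (hc : ∀ x ∈ s, c ≤ |(f' x).det|) : ENNReal.ofReal c * μ s ≤ μ (f '' s) := by
  rw [← lintegral_abs_det_fderiv_eq_addHaar_image μ hs hf' hf, ← setLIntegral_const]
  exact setLIntegral_mono' hs fun x hx ↦ ENNReal.ofReal_le_ofReal (hc x hx)

lemma measurePreserving_prodProdProdComm {α β γ δ : Type*} [MeasurableSpace α]
    [MeasurableSpace β] [MeasurableSpace γ] [MeasurableSpace δ] (μa : Measure α) (μb : Measure β)
    (μc : Measure γ) (μd : Measure δ) [SFinite μa] [SFinite μb] [SFinite μc] [SFinite μd] :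
    MeasurePreserving (Equiv.prodProdProdComm α β γ δ) ((μa.prod μb).prod (μc.prod μd))
      ((μa.prod μc).prod (μb.prod μd)) := by
  have swap_middle : MeasurePreserving (fun p : β × γ × δ ↦ (p.2.1, p.1, p.2.2))
      (μb.prod (μc.prod μd)) (μc.prod (μb.prod μd)) :=
    (measurePreserving_prodAssoc μc μb μd).comp <|
      (Measure.measurePreserving_swap.prod (.id μd)).comp
        (measurePreserving_prodAssoc μb μc μd).symm
  exact (measurePreserving_prodAssoc μa μc (μb.prod μd)).symm.comp <|
    ((MeasurePreserving.id μa).prod swap_middle).comp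
      (measurePreserving_prodAssoc μa μb (μc.prod μd))

end Measure

section Fourier

variable {E : Type*} [NormedAddCommGroup E] [NormedSpace ℝ E]

/-- The pointwise product of two Schwartz functions, as a Schwartz function. -/
def schwartzMul (f g : 𝓢(E, ℂ)) : 𝓢(E, ℂ) := pairing (.mul ℂ ℂ) f g

@[simp]
lemma schwartzMul_apply (f g : 𝓢(E, ℂ)) (x : E) : schwartzMul f g x = f x * g x := rfl

variable {V : Type*} [NormedAddCommGroup V] [InnerProductSpace ℝ V] [FiniteDimensional ℝ V]
  [MeasurableSpace V] [BorelSpace V]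

lemma fourier_fourier_apply {F : Type*} [NormedAddCommGroup F] [NormedSpace ℂ F] [CompleteSpace F]
    (f : 𝓢(V, F)) (x : V) : 𝓕 (𝓕 f) x = f (-x) := by
  rw [← neg_neg x, fourier_coe, ← Real.fourierInv_eq_fourier_neg, ← fourierInv_coe,
    FourierTransform.fourierInv_fourier_eq, neg_neg]

lemma fourier_pairing {F₁ F₂ F₃ : Type*} [NormedAddCommGroup F₁] [NormedSpace ℂ F₁]
    [CompleteSpace F₁] [NormedAddCommGroup F₂] [NormedSpace ℂ F₂] [CompleteSpace F₂]
    [NormedAddCommGroup F₃] [NormedSpace ℂ F₃] [CompleteSpace F₃] (B : F₁ →L[ℂ] F₂ →L[ℂ] F₃)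
    (f : 𝓢(V, F₁)) (g : 𝓢(V, F₂)) :
    𝓕 (pairing B f g) = SchwartzMap.convolution B (𝓕 f) (𝓕 g) := by
  have pairing_reflect : pairing B (𝓕 (𝓕 f)) (𝓕 (𝓕 g)) = 𝓕 (𝓕 (pairing B f g)) := by
    ext x
    simp only [pairing_apply_apply, fourier_fourier_apply]
  change _ = 𝓕⁻ (pairing B (𝓕 (𝓕 f)) (𝓕 (𝓕 g)))
  rw [pairing_reflect, FourierTransform.fourierInv_fourier_eq]

lemma fourier_schwartzMul_apply (f g : 𝓢(V, ℂ)) (ξ : V) :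
    𝓕 (schwartzMul f g) ξ = ∫ η, 𝓕 f η * 𝓕 g (ξ - η) := by
  rw [schwartzMul, fourier_pairing, convolution_apply]
  rfl

lemma support_fourier_schwartzMul_subset (f g : 𝓢(V, ℂ)) :
    support (𝓕 ⇑(schwartzMul f g)) ⊆ support (𝓕 ⇑f) + support (𝓕 ⇑g) := by
  rw [← fourier_coe, schwartzMul, fourier_pairing, funext (convolution_apply _ (𝓕 f) (𝓕 g))]
  exact support_convolution_subset _

lemma enorm_fourier_schwartzMul_le (f g : 𝓢(V, ℂ)) (ξ : V) :
    ‖𝓕 (schwartzMul f g) ξ‖ₑ ≤ ∫⁻ η, ‖𝓕 f η‖ₑ * ‖𝓕 g (ξ - η)‖ₑ := by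
  simp_rw [fourier_schwartzMul_apply, ← enorm_mul]
  exact enorm_integral_le_lintegral_enorm _

lemma integrable_norm_sq (f : 𝓢(V, ℂ)) : Integrable fun x ↦ ‖f x‖ ^ 2 :=
  (f.memLp 2).integrable_norm_pow two_ne_zero

lemma ofReal_integral_norm_sq (f : 𝓢(V, ℂ)) :
    ENNReal.ofReal (∫ x, ‖f x‖ ^ 2) = ∫⁻ x, ‖f x‖ₑ ^ 2 := by
  rw [ofReal_integral_eq_lintegral_ofReal (integrable_norm_sq f) (by filter_upwards; simp)]
  simp only [ENNReal.ofReal_pow (norm_nonneg _), ofReal_norm]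

lemma lintegral_enorm_fourier_sq (f : 𝓢(V, ℂ)) :
    ∫⁻ ξ, ‖𝓕 f ξ‖ₑ ^ 2 = ∫⁻ x, ‖f x‖ₑ ^ 2 := by
  rw [← ofReal_integral_norm_sq, ← ofReal_integral_norm_sq, integral_norm_sq_fourier]

/-- The fiber over `ξ` of the addition map `N 0 × N 1 × N 2 → V`: the ways of writing `ξ` as a sum
of one point from each `N i`, recorded by the first two summands. -/
def sumFiber {G : Type*} [AddGroup G] (N : Fin 3 → Set G) (ξ : G) : Set (G × G) :=
  {p | p.1 ∈ N 0 ∧ p.2 ∈ N 1 ∧ ξ - p.1 - p.2 ∈ N 2}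

lemma lintegral_lintegral_sumFiber {u : Fin 3 → V → ℝ≥0∞} (hu : ∀ i, Measurable (u i)) :
    ∫⁻ ξ, ∫⁻ p : V × V, u 0 p.1 * (u 1 p.2 * u 2 (ξ - p.1 - p.2)) = ∏ i, ∫⁻ ξ, u i ξ := by
  have h1 := hu 1
  have h2 := hu 2
  calc ∫⁻ ξ, ∫⁻ p : V × V, u 0 p.1 * (u 1 p.2 * u 2 (ξ - p.1 - p.2))
      = ∫⁻ p : V × V, ∫⁻ ξ, u 0 p.1 * (u 1 p.2 * u 2 (ξ - p.1 - p.2)) :=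
        lintegral_lintegral_swap (by unfold uncurry; fun_prop)
    _ = ∫⁻ p : V × V, u 0 p.1 * (u 1 p.2 * ∫⁻ ξ, u 2 ξ) := by
        refine lintegral_congr fun p ↦ ?_
        rw [lintegral_const_mul _ (by fun_prop), lintegral_const_mul _ (by fun_prop)]
        simp_rw [sub_sub, lintegral_sub_right_eq_self (u 2)]
    _ = ∏ i, ∫⁻ ξ, u i ξ := by
        rw [Measure.volume_eq_prod, lintegral_prod_mul (f := u 0) (g := fun ζ ↦ u 1 ζ * ∫⁻ ξ, u 2 ξ)
          (by fun_prop) (by fun_prop), lintegral_mul_const _ h1, Fin.prod_univ_three, mul_assoc]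

lemma enorm_fourier_schwartzMul_schwartzMul_le (g : Fin 3 → 𝓢(V, ℂ)) (ξ : V) :
    ‖𝓕 (schwartzMul (g 0) (schwartzMul (g 1) (g 2))) ξ‖ₑ ≤
      ∫⁻ p : V × V, ‖𝓕 (g 0) p.1‖ₑ * (‖𝓕 (g 1) p.2‖ₑ * ‖𝓕 (g 2) (ξ - p.1 - p.2)‖ₑ) := by
  rw [Measure.volume_eq_prod, lintegral_prod _ (by fun_prop)]
  refine (enorm_fourier_schwartzMul_le _ _ ξ).trans (lintegral_mono fun η ↦ ?_)
  dsimp only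
  rw [lintegral_const_mul _ (by fun_prop)]
  gcongr
  exact enorm_fourier_schwartzMul_le _ _ _

lemma lintegral_enorm_fourier_schwartzMul_sq_le {N : Fin 3 → Set V} {A : ℝ≥0∞}
    (hA : ∀ ξ, volume (sumFiber N ξ) ≤ A) {g : Fin 3 → 𝓢(V, ℂ)}
    (hg : ∀ i, support (𝓕 ⇑(g i)) ⊆ N i) :
    ∫⁻ ξ, ‖𝓕 (schwartzMul (g 0) (schwartzMul (g 1) (g 2))) ξ‖ₑ ^ 2 ≤
      A * ∏ i, ∫⁻ ξ, ‖𝓕 (g i) ξ‖ₑ ^ 2 := by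
  have hm (i : Fin 3) : Measurable (𝓕 ⇑(g i)) := (𝓕 (g i)).continuous.measurable
  let F (ξ : V) (p : V × V) : ℝ≥0∞ :=
    ‖𝓕 (g 0) p.1‖ₑ * (‖𝓕 (g 1) p.2‖ₑ * ‖𝓕 (g 2) (ξ - p.1 - p.2)‖ₑ)
  have hF (ξ : V) : Measurable (F ξ) := by unfold F; fun_prop
  have support_F (ξ : V) : support (F ξ) ⊆ sumFiber N ξ := fun p hp ↦ by
    simp only [F, mem_support, mul_ne_zero_iff, enorm_ne_zero] at hp
    exact ⟨hg 0 hp.1, hg 1 hp.2.1, hg 2 hp.2.2⟩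
  calc ∫⁻ ξ, ‖𝓕 (schwartzMul (g 0) (schwartzMul (g 1) (g 2))) ξ‖ₑ ^ 2
      ≤ ∫⁻ ξ, A * ∫⁻ p, F ξ p ^ 2 := by
        refine lintegral_mono fun ξ ↦ ?_
        calc ‖𝓕 (schwartzMul (g 0) (schwartzMul (g 1) (g 2))) ξ‖ₑ ^ 2
            ≤ (∫⁻ p, F ξ p) ^ 2 := by
              gcongr
              exact enorm_fourier_schwartzMul_schwartzMul_le g ξ
          _ ≤ volume (sumFiber N ξ) * ∫⁻ p, F ξ p ^ 2 :=
              sq_lintegral_le_measure_mul_lintegral_sq (hF ξ).aemeasurable (support_F ξ)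
          _ ≤ A * ∫⁻ p, F ξ p ^ 2 := by gcongr; exact hA ξ
    _ = A * ∏ i, ∫⁻ ξ, ‖𝓕 (g i) ξ‖ₑ ^ 2 := by
        rw [← lintegral_lintegral_sumFiber (u := fun i ξ ↦ ‖𝓕 (g i) ξ‖ₑ ^ 2) (by fun_prop),
          lintegral_const_mul]
        · simp only [F, mul_pow]
        · exact Measurable.lintegral_prod_right' (f := fun q : V × V × V ↦ F q.1 q.2 ^ 2)
            (by unfold F; fun_prop)

lemma integral_norm_sq_mul_mul_le {N : Fin 3 → Set V} {A : ℝ} (hA₀ : 0 ≤ A)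
    (hA : ∀ ξ, volume (sumFiber N ξ) ≤ ENNReal.ofReal A) {g : Fin 3 → 𝓢(V, ℂ)}
    (hg : ∀ i, support (𝓕 ⇑(g i)) ⊆ N i) :
    ∫ x, ‖g 0 x * g 1 x * g 2 x‖ ^ 2 ≤ A * ∏ i, ∫ x, ‖g i x‖ ^ 2 := by
  have key := lintegral_enorm_fourier_schwartzMul_sq_le hA hg
  simp_rw [lintegral_enorm_fourier_sq, ← ofReal_integral_norm_sq] at key
  rw [← ENNReal.ofReal_prod_of_nonneg (fun i _ ↦ by positivity), ← ENNReal.ofReal_mul hA₀,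
    ENNReal.ofReal_le_ofReal_iff (by positivity)] at key
  simpa only [schwartzMul_apply, mul_assoc] using key

end Fourier

section PairwiseSeparated

variable {ι X : Type*}

/-- The sets `J i` lie pairwise at distance at least `d`, with the same `d` for all pairs. -/
def PairwiseSeparated [Dist X] (d : ℝ) (J : ι → Set X) : Prop :=
  Pairwise fun i j ↦ ∀ x ∈ J i, ∀ y ∈ J j, d ≤ dist x y

variable [PseudoMetricSpace X] {d : ℝ} {J : ι → Set X}

lemma PairwiseSeparated.pairwise_disjoint (hJ : PairwiseSeparated d J) (hd : 0 < d) :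
    Pairwise (Disjoint on J) := fun _ _ hij ↦
  Set.disjoint_left.2 fun x hi hj ↦ ((hJ hij x hi x hj).trans_eq (dist_self x)).not_gt hd

lemma PairwiseSeparated.thickening (hJ : PairwiseSeparated d J) (τ : ℝ) :
    PairwiseSeparated (d - 2 * τ) fun i ↦ Metric.thickening τ (J i) := by
  intro i j hij x hx y hy
  obtain ⟨x', hx', hxx'⟩ := mem_thickening_iff.1 hx
  obtain ⟨y', hy', hyy'⟩ := mem_thickening_iff.1 hy
  rw [dist_comm] at hxx'
  linarith [hJ hij x' hx' y' hy', dist_triangle4 x' x y y']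

end PairwiseSeparated

section PowerSums

lemma mul_sub_eq_mul_sub_of_powerSums_eq {K : Type*} [Field K] [CharZero K] {a b c a' b' c' : K}
    (h₁ : a + b + c = a' + b' + c') (h₂ : a ^ 2 + b ^ 2 + c ^ 2 = a' ^ 2 + b' ^ 2 + c' ^ 2)
    (h₃ : a ^ 3 + b ^ 3 + c ^ 3 = a' ^ 3 + b' ^ 3 + c' ^ 3) (t : K) :
    (t - a) * (t - b) * (t - c) = (t - a') * (t - b') * (t - c') := by
  have e₂ : a * b + a * c + b * c = a' * b' + a' * c' + b' * c' := by
    linear_combination (1 / 2) * (a + b + c + (a' + b' + c')) * h₁ - (1 / 2) * h₂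
  have e₃ : a * b * c = a' * b' * c' := by
    linear_combination (1 / 3) * (h₃ - (a ^ 2 + b ^ 2 + c ^ 2) * h₁ - (a' + b' + c') * h₂ +
      (a * b + a * c + b * c) * h₁ + (a' + b' + c') * e₂)
  linear_combination (-t ^ 2) * h₁ + t * e₂ - e₃

/-- The sums of squares and of cubes of three numbers with sum `x`, as a function of the first two
of them. -/
def powerSumMap (x : ℝ) (p : ℝ × ℝ) : ℝ × ℝ :=
  (p.1 ^ 2 + p.2 ^ 2 + (x - p.1 - p.2) ^ 2, p.1 ^ 3 + p.2 ^ 3 + (x - p.1 - p.2) ^ 3)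

/-- The Fréchet derivative of `powerSumMap x` at `p`. -/
def powerSumDeriv (x : ℝ) (p : ℝ × ℝ) : ℝ × ℝ →L[ℝ] ℝ × ℝ :=
  (Matrix.toLin (.finTwoProd ℝ) (.finTwoProd ℝ)
    !![2 * p.1 - 2 * (x - p.1 - p.2), 2 * p.2 - 2 * (x - p.1 - p.2);
      3 * p.1 ^ 2 - 3 * (x - p.1 - p.2) ^ 2,
      3 * p.2 ^ 2 - 3 * (x - p.1 - p.2) ^ 2]).toContinuousLinearMap

lemma hasFDerivAt_powerSumMap (x : ℝ) (p : ℝ × ℝ) :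
    HasFDerivAt (powerSumMap x) (powerSumDeriv x p) p := by
  rw [powerSumDeriv, Matrix.toLin_finTwoProd_toContinuousLinearMap]
  have hfst : HasFDerivAt (fun p : ℝ × ℝ ↦ p.1) (.fst ℝ ℝ ℝ) p := hasFDerivAt_fst
  have hsnd : HasFDerivAt (fun p : ℝ × ℝ ↦ p.2) (.snd ℝ ℝ ℝ) p := hasFDerivAt_snd
  have hthird := (hfst.const_sub x).sub hsnd
  refine HasFDerivAt.congr_fderiv (.prodMk (((hfst.pow 2).add (hsnd.pow 2)).add (hthird.pow 2))
    (((hfst.pow 3).add (hsnd.pow 3)).add (hthird.pow 3))) ?_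
  ext <;> simp <;> ring

-- The Jacobian is the Vandermonde determinant of the three summands, up to the factor `6`.
lemma det_powerSumDeriv (x : ℝ) (p : ℝ × ℝ) :
    (powerSumDeriv x p).det =
      6 * ((p.1 - p.2) * (p.1 - (x - p.1 - p.2)) * ((x - p.1 - p.2) - p.2)) := by
  simp only [powerSumDeriv, LinearMap.det_toContinuousLinearMap, LinearMap.det_toLin,
    Matrix.det_fin_two_of]
  ring

lemma injOn_powerSumMap {J : Fin 3 → Set ℝ} (hJ : Pairwise (Disjoint on J)) (x : ℝ) :
    InjOn (powerSumMap x) (sumFiber J x) := by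
  rintro ⟨a, b⟩ ⟨ha, hb, hc⟩ ⟨a', b'⟩ ⟨ha', hb', -⟩ h
  obtain ⟨h₂, h₃⟩ := Prod.mk.inj h
  have same_roots := mul_sub_eq_mul_sub_of_powerSums_eq (by ring) h₂ h₃
  have ne {i j : Fin 3} (hij : i ≠ j) {t u : ℝ} (ht : t ∈ J i) (hu : u ∈ J j) : t - u ≠ 0 :=
    sub_ne_zero.2 ((hJ hij).ne_of_mem ht hu)
  have haa' : a' = a := by
    simpa [sub_eq_zero, ne (i := 0) (j := 1) (by decide) ha' hb,
      ne (i := 0) (j := 2) (by decide) ha' hc] using same_roots a'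
  have hbb' : b' = b := by
    simpa [sub_eq_zero, ne (i := 1) (j := 0) (by decide) hb' ha,
      ne (i := 1) (j := 2) (by decide) hb' hc] using same_roots b'
  rw [haa', hbb']

lemma le_abs_det_powerSumDeriv {J : Fin 3 → Set ℝ} {d : ℝ} (hd : 0 ≤ d)
    (hJ : PairwiseSeparated d J) {x : ℝ} {p : ℝ × ℝ} (hp : p ∈ sumFiber J x) :
    6 * d ^ 3 ≤ |(powerSumDeriv x p).det| := by
  obtain ⟨h0, h1, h2⟩ := hp
  have h01 := hJ (i := 0) (j := 1) (by decide) _ h0 _ h1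
  have h02 := hJ (i := 0) (j := 2) (by decide) _ h0 _ h2
  have h21 := hJ (i := 2) (j := 1) (by decide) _ h2 _ h1
  rw [Real.dist_eq] at h01 h02 h21
  rw [det_powerSumDeriv, abs_mul, abs_mul, abs_mul, abs_of_pos (by norm_num : (0 : ℝ) < 6),
    show d ^ 3 = d * d * d by ring]
  gcongr

lemma measurableSet_sumFiber {G : Type*} [AddGroup G] [MeasurableSpace G] [MeasurableSub₂ G]
    {N : Fin 3 → Set G} (hN : ∀ i, MeasurableSet (N i)) (ξ : G) : MeasurableSet (sumFiber N ξ) :=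
  (measurable_fst (hN 0)).inter <| (measurable_snd (hN 1)).inter <|
    (show Measurable fun p : G × G ↦ ξ - p.1 - p.2 by fun_prop) (hN 2)

lemma measurable_powerSumMap (x : ℝ) : Measurable (powerSumMap x) := by
  unfold powerSumMap
  fun_prop

lemma ofReal_mul_volume_sumFiber_inter_le {J : Fin 3 → Set ℝ} (hJm : ∀ i, MeasurableSet (J i))
    {d : ℝ} (hd : 0 < d) (hJ : PairwiseSeparated d J) (x : ℝ) {Q : Set (ℝ × ℝ)}
    (hQ : MeasurableSet Q) :
    ENNReal.ofReal (6 * d ^ 3) * volume (sumFiber J x ∩ powerSumMap x ⁻¹' Q) ≤ volume Q :=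
  (ofReal_mul_measure_le_measure_image_of_le_abs_det volume
    ((measurableSet_sumFiber hJm x).inter (measurable_powerSumMap x hQ))
    (fun p _ ↦ (hasFDerivAt_powerSumMap x p).hasFDerivWithinAt)
    ((injOn_powerSumMap (hJ.pairwise_disjoint hd) x).mono Set.inter_subset_left)
    fun _ hp ↦ le_abs_det_powerSumDeriv hd.le hJ hp.1).trans
  (measure_mono (Set.image_subset_iff.2 Set.inter_subset_right))

end PowerSums

section MomentTube

/-- The shear of `ℝ³` that maps the moment curve `(t, t², t³)` to the line `(t, 0, 0)`. -/
def momentStraighten (ξ : R3) : ℝ × ℝ × ℝ := (ξ 0, ξ 1 - ξ 0 ^ 2, ξ 2 - ξ 0 ^ 3)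

lemma measurePreserving_momentStraighten : MeasurePreserving momentStraighten := by
  have split : MeasurePreserving fun ξ : R3 ↦ (ξ 0, ξ 1, ξ 2) :=
    ((MeasurePreserving.id volume).prod (volume_preserving_finTwoArrow ℝ)).comp <|
      (volume_preserving_piFinSuccAbove (fun _ : Fin 3 ↦ ℝ) 0).comp
        (EuclideanSpace.volume_preserving_symm_measurableEquiv_toLp (Fin 3))
  have shear : MeasurePreserving fun q : ℝ × ℝ × ℝ ↦ (q.1, q.2.1 - q.1 ^ 2, q.2.2 - q.1 ^ 3) :=
    (MeasurePreserving.id volume).skew_product (by fun_prop) <| Filter.Eventually.of_forall fun t ↦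
      (measurePreserving_sub_right volume ((t ^ 2, t ^ 3) : ℝ × ℝ)).map_eq
  exact shear.comp split

/-- The tube around the arc of the moment curve over `J` whose cross-section is a square of side
length `2 * δ`. -/
def momentTube (J : Set ℝ) (δ : ℝ) : Set R3 :=
  momentStraighten ⁻¹' (J ×ˢ Set.Icc (-δ) δ ×ˢ Set.Icc (-δ) δ)

lemma mem_momentTube_iff {J : Set ℝ} {δ : ℝ} {ξ : R3} :
    ξ ∈ momentTube J δ ↔ ξ 0 ∈ J ∧ |ξ 1 - ξ 0 ^ 2| ≤ δ ∧ |ξ 2 - ξ 0 ^ 3| ≤ δ := by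
  simp only [momentTube, momentStraighten, Set.mem_preimage, Set.mem_prod, Set.mem_Icc, abs_le]

lemma momNbhd_subset_momentTube (J : Set ℝ) {r : ℝ} (hr : 0 ≤ r) :
    momNbhd J r ⊆ momentTube J r⁻¹ := by
  rintro ξ ⟨h0, h12⟩
  have hr' : 0 ≤ r⁻¹ := inv_nonneg.2 hr
  refine mem_momentTube_iff.2 ⟨h0, abs_le_of_sq_le_sq ?_ hr', abs_le_of_sq_le_sq ?_ hr'⟩ <;>
    nlinarith

lemma momentTube_add_ball_subset {J : Set ℝ} {R : ℝ} (hJ : J ⊆ Set.Icc (-R) R) (δ : ℝ) {τ : ℝ}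
    (hτ : τ ≤ 1) :
    momentTube J δ + ball 0 τ ⊆ momentTube (thickening τ J) (δ + 4 * (R + 1) ^ 2 * τ) := by
  rintro _ ⟨ξ, hξ, η, hη, rfl⟩
  obtain ⟨h0, h1, h2⟩ := mem_momentTube_iff.1 hξ
  have hη_coord (i : Fin 3) : |η i| ≤ τ :=
    (PiLp.norm_apply_le η i).trans (mem_ball_zero_iff.1 hη).le
  have hξ0 : |ξ 0| ≤ R := abs_le.2 (hJ h0)
  have hR : 0 ≤ R := (abs_nonneg _).trans hξ0
  have hτ0 : 0 ≤ τ := (abs_nonneg _).trans (hη_coord 0)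
  have hmax : max |ξ 0 + η 0| |ξ 0| ≤ R + 1 :=
    max_le ((abs_add_le _ _).trans (add_le_add hξ0 ((hη_coord 0).trans hτ))) (by linarith)
  have pow_diff (n : ℕ) : |(ξ 0 + η 0) ^ n - ξ 0 ^ n| ≤ n * (R + 1) ^ (n - 1) * τ := calc
    _ ≤ |ξ 0 + η 0 - ξ 0| * n * max |ξ 0 + η 0| |ξ 0| ^ (n - 1) := abs_pow_sub_pow_le _ _ _
    _ ≤ τ * n * (R + 1) ^ (n - 1) := by
      rw [add_sub_cancel_left]
      gcongr
      exact hη_coord 0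
    _ = n * (R + 1) ^ (n - 1) * τ := by ring
  have coord_bound {i : Fin 3} {n : ℕ} (h : |ξ i - ξ 0 ^ n| ≤ δ)
      (hn : n * (R + 1) ^ (n - 1) ≤ 3 * (R + 1) ^ 2) :
      |(ξ i + η i) - (ξ 0 + η 0) ^ n| ≤ δ + 4 * (R + 1) ^ 2 * τ := calc
    _ = |(ξ i - ξ 0 ^ n) + η i - ((ξ 0 + η 0) ^ n - ξ 0 ^ n)| := by ring_nf
    _ ≤ |ξ i - ξ 0 ^ n| + |η i| + |(ξ 0 + η 0) ^ n - ξ 0 ^ n| :=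
      (abs_sub _ _).trans (by gcongr; exact abs_add_le _ _)
    _ ≤ δ + τ + 3 * (R + 1) ^ 2 * τ := by
      gcongr
      exacts [hη_coord i, (pow_diff n).trans (by gcongr)]
    _ ≤ δ + 4 * (R + 1) ^ 2 * τ := by nlinarith [mul_nonneg hτ0 hR, mul_nonneg hτ0 (sq_nonneg R)]
  refine mem_momentTube_iff.2 ⟨mem_thickening_iff.2 ⟨ξ 0, h0, ?_⟩,
    coord_bound h1 (by norm_num; nlinarith), coord_bound h2 (by norm_num)⟩
  simpa using (PiLp.norm_apply_le η 0).trans_lt (mem_ball_zero_iff.1 hη)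

lemma powerSumMap_mem_of_mem_sumFiber_momentTube {J : Fin 3 → Set ℝ} {δ : ℝ} {ξ : R3} {p : R3 × R3}
    (hp : p ∈ sumFiber (fun i ↦ momentTube (J i) δ) ξ) :
    powerSumMap (ξ 0) (p.1 0, p.2 0) ∈
      Set.Icc (ξ 1 - 3 * δ) (ξ 1 + 3 * δ) ×ˢ Set.Icc (ξ 2 - 3 * δ) (ξ 2 + 3 * δ) := by
  obtain ⟨⟨-, ⟨_, _⟩, _, _⟩, ⟨-, ⟨_, _⟩, _, _⟩, -, ⟨_, _⟩, _, _⟩ := hp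
  simp only [momentStraighten, PiLp.sub_apply] at *
  refine ⟨⟨?_, ?_⟩, ?_, ?_⟩ <;> simp only [powerSumMap] <;> linarith

lemma volume_Icc_prod_Icc (y w : ℝ) {ε : ℝ} (hε : 0 ≤ ε) :
    volume (Set.Icc (y - ε) (y + ε) ×ˢ Set.Icc (w - ε) (w + ε)) = ENNReal.ofReal (4 * ε ^ 2) := by
  rw [Measure.volume_eq_prod, Measure.prod_prod, Real.volume_Icc, Real.volume_Icc,
    ← ENNReal.ofReal_mul (by linarith)]
  ring_nf

lemma volume_sumFiber_inter_Icc_prod_Icc_le {J : Fin 3 → Set ℝ} (hJm : ∀ i, MeasurableSet (J i))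
    {d : ℝ} (hd : 0 < d) (hJ : PairwiseSeparated d J) (x y w : ℝ) {ε : ℝ} (hε : 0 ≤ ε) :
    volume (sumFiber J x ∩
        powerSumMap x ⁻¹' (Set.Icc (y - ε) (y + ε) ×ˢ Set.Icc (w - ε) (w + ε))) ≤
      ENNReal.ofReal (2 * ε ^ 2 / (3 * d ^ 3)) := by
  have jacobian := ofReal_mul_volume_sumFiber_inter_le hJm hd hJ x
    (measurableSet_Icc.prod measurableSet_Icc : MeasurableSet
      (Set.Icc (y - ε) (y + ε) ×ˢ Set.Icc (w - ε) (w + ε)))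
  have hd6 : 0 < 6 * d ^ 3 := by positivity
  rw [volume_Icc_prod_Icc y w hε, mul_comm,
    ← ENNReal.le_div_iff_mul_le (.inl (ENNReal.ofReal_pos.2 hd6).ne') (.inl ENNReal.ofReal_ne_top),
    ← ENNReal.ofReal_div_of_pos hd6] at jacobian
  convert jacobian using 2
  field

/-- The fiber is contained in the preimage, under straightening both summands, of a product of a
planar set of base points with two squares of side length `2 * δ`. -/
lemma volume_sumFiber_momentTube_le {J : Fin 3 → Set ℝ} (hJm : ∀ i, MeasurableSet (J i)) {d : ℝ}
    (hd : 0 < d) (hJ : PairwiseSeparated d J) {δ : ℝ} (hδ : 0 ≤ δ) (ξ : R3) :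
    volume (sumFiber (fun i ↦ momentTube (J i) δ) ξ) ≤ ENNReal.ofReal (96 * δ ^ 6 / d ^ 3) := by
  let S := sumFiber J (ξ 0) ∩ powerSumMap (ξ 0) ⁻¹'
    (Set.Icc (ξ 1 - 3 * δ) (ξ 1 + 3 * δ) ×ˢ Set.Icc (ξ 2 - 3 * δ) (ξ 2 + 3 * δ))
  let Q := Set.Icc (-δ) δ ×ˢ Set.Icc (-δ) δ
  have hS : MeasurableSet S := (measurableSet_sumFiber hJm _).inter
    (measurable_powerSumMap _ (measurableSet_Icc.prod measurableSet_Icc))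
  have hQ : MeasurableSet Q := measurableSet_Icc.prod measurableSet_Icc
  have volume_Q : volume Q = ENNReal.ofReal (4 * δ ^ 2) := by
    simpa [Q] using volume_Icc_prod_Icc 0 0 hδ
  have straighten := (measurePreserving_prodProdProdComm volume volume volume volume).comp
    (measurePreserving_momentStraighten.prod measurePreserving_momentStraighten)
  calc volume (sumFiber (fun i ↦ momentTube (J i) δ) ξ)
      ≤ volume (Equiv.prodProdProdComm ℝ (ℝ × ℝ) ℝ (ℝ × ℝ) ∘
          Prod.map momentStraighten momentStraighten ⁻¹' (S ×ˢ Q ×ˢ Q)) :=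
        measure_mono fun p hp ↦ ⟨⟨⟨hp.1.1, hp.2.1.1, hp.2.2.1⟩,
          powerSumMap_mem_of_mem_sumFiber_momentTube hp⟩, hp.1.2, hp.2.1.2⟩
    _ = volume S * (volume Q * volume Q) := by
        rw [← Measure.prod_prod, ← Measure.prod_prod]
        exact straighten.measure_preimage (hS.prod (hQ.prod hQ)).nullMeasurableSet
    _ ≤ ENNReal.ofReal (2 * (3 * δ) ^ 2 / (3 * d ^ 3)) *
          (ENNReal.ofReal (4 * δ ^ 2) * ENNReal.ofReal (4 * δ ^ 2)) := by
        rw [volume_Q]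
        gcongr
        exact volume_sumFiber_inter_Icc_prod_Icc_le hJm hd hJ _ _ _ (by positivity)
    _ = ENNReal.ofReal (96 * δ ^ 6 / d ^ 3) := by
        rw [← ENNReal.ofReal_mul (by positivity), ← ENNReal.ofReal_mul (by positivity)]
        congr 1
        field

end MomentTube

section Cutoff

variable {V : Type*} [NormedAddCommGroup V]

/-- The weight `(1 + |x - z| / r) ^ (-N)`, which is comparable to `1` on the ball of center `z` and
radius `r` and decays away from it. -/
def ballWeight (N : ℕ) (z : V) (r : ℝ) (x : V) : ℝ := (1 + dist x z / r) ^ (-(N : ℝ))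

section ballWeight

variable (N : ℕ) (z : V) {r : ℝ} (hr : 0 < r) (x : V)
include hr

lemma ballWeight_pos : 0 < ballWeight N z r x := by
  unfold ballWeight
  positivity

lemma ballWeight_le_one : ballWeight N z r x ≤ 1 :=
  Real.rpow_le_one_of_one_le_of_nonpos (le_add_of_nonneg_right (by positivity)) (by simp)

lemma continuous_ballWeight : Continuous (ballWeight N z r) := by
  unfold ballWeight
  exact Continuous.rpow_const (by fun_prop) fun x ↦ .inl (by positivity)

lemma ballWeight_le_infDist :
    ballWeight N z r x ≤ (1 + infDist x (ball z r) / r) ^ (-(N : ℝ)) := by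
  have infDist_nonneg : 0 ≤ infDist x (ball z r) := infDist_nonneg
  refine Real.rpow_le_rpow_of_nonpos (by positivity) ?_ (by simp)
  gcongr
  exact infDist_le_dist_of_mem (mem_ball_self hr)

end ballWeight

lemma exists_norm_sq_le_rpow_neg [NormedSpace ℝ V] {F : Type*} [NormedAddCommGroup F]
    [NormedSpace ℝ F] (φ : 𝓢(V, F)) (N : ℕ) :
    ∃ C > 0, ∀ x, ‖φ x‖ ^ 2 ≤ C * (1 + ‖x‖) ^ (-(N : ℝ)) := by
  let D := 2 ^ N * ((Finset.Iic (N, 0)).sup fun m ↦ SchwartzMap.seminorm ℝ m.1 m.2) φ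
  have decay (x : V) : (1 + ‖x‖) ^ N * ‖φ x‖ ≤ D := by
    simpa using one_add_le_sup_seminorm_apply (𝕜 := ℝ) (m := (N, 0)) (k := N) le_rfl le_rfl φ x
  refine ⟨D ^ 2 + 1, by positivity, fun x ↦ ?_⟩
  have one_le_pow : 1 ≤ (1 + ‖x‖) ^ N := one_le_pow₀ (le_add_of_nonneg_right (norm_nonneg x))
  rw [Real.rpow_neg (by positivity), Real.rpow_natCast, ← div_eq_mul_inv,
    le_div_iff₀ (by positivity)]
  calc ‖φ x‖ ^ 2 * (1 + ‖x‖) ^ N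
      ≤ ‖φ x‖ ^ 2 * ((1 + ‖x‖) ^ N) ^ 2 := by
        gcongr
        exact le_self_pow₀ one_le_pow two_ne_zero
    _ = ((1 + ‖x‖) ^ N * ‖φ x‖) ^ 2 := by ring
    _ ≤ D ^ 2 := by gcongr; exact decay x
    _ ≤ D ^ 2 + 1 := by simp

/-- The Schwartz function `x ↦ φ (c • (x - z))`. -/
def affineRescale [NormedSpace ℝ V] (φ : 𝓢(V, ℂ)) (c : ℝˣ) (z : V) : 𝓢(V, ℂ) :=
  compSubConstCLM ℂ z (compCLMOfContinuousLinearEquiv ℂ (ContinuousLinearEquiv.smulLeft c) φ)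

lemma affineRescale_apply [NormedSpace ℝ V] (φ : 𝓢(V, ℂ)) (c : ℝˣ) (z x : V) :
    affineRescale φ c z x = φ ((c : ℝ) • (x - z)) := rfl

variable [InnerProductSpace ℝ V] [FiniteDimensional ℝ V] [MeasurableSpace V] [BorelSpace V]

lemma fourier_comp_smul {F : Type*} [NormedAddCommGroup F] [NormedSpace ℂ F] (f : V → F) {c : ℝ}
    (hc : c ≠ 0) (ξ : V) :
    𝓕 (fun x ↦ f (c • x)) ξ = |(c ^ Module.finrank ℝ V)⁻¹| • 𝓕 f (c⁻¹ • ξ) := by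
  rw [Real.fourier_eq, Real.fourier_eq, ← Measure.integral_comp_smul]
  simp only [real_inner_smul_left, real_inner_smul_right, inv_mul_cancel_left₀ hc]

lemma fourier_comp_sub_right {F : Type*} [NormedAddCommGroup F] [NormedSpace ℂ F] (f : V → F)
    (z ξ : V) : 𝓕 (fun x ↦ f (x - z)) ξ = Real.fourierChar (-inner ℝ z ξ) • 𝓕 f ξ := by
  simp_rw [sub_eq_add_neg, ← inner_neg_left]
  exact congrFun (VectorFourier.fourierIntegral_comp_add_right Real.fourierChar volume
    (innerₗ V) f (-z)) ξ

lemma support_fourier_affineRescale_subset {φ : 𝓢(V, ℂ)} {ε : ℝ}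
    (hφ : support (𝓕 ⇑φ) ⊆ ball 0 ε) (c : ℝˣ) (z : V) :
    support (𝓕 ⇑(affineRescale φ c z)) ⊆ ball 0 (|(c : ℝ)| * ε) := by
  intro ξ hξ
  rw [show ⇑(affineRescale φ c z) = fun x ↦ φ ((c : ℝ) • (x - z)) from rfl, mem_support,
    fourier_comp_sub_right (fun x ↦ φ ((c : ℝ) • x)), fourier_comp_smul _ c.ne_zero] at hξ
  have hmem : (c : ℝ)⁻¹ • ξ ∈ ball (0 : V) ε := hφ fun h ↦ hξ (by rw [h, smul_zero, smul_zero])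
  rwa [mem_ball_zero_iff, norm_smul, norm_inv, Real.norm_eq_abs,
    inv_mul_lt_iff₀ (abs_pos.2 c.ne_zero), ← mem_ball_zero_iff] at hmem

variable (V) in
lemma exists_apply_zero_ne_zero_support_fourier_subset :
    ∃ φ : 𝓢(V, ℂ), φ 0 ≠ 0 ∧ support (𝓕 ⇑φ) ⊆ ball 0 1 := by
  let b : ContDiffBump (0 : V) := ⟨1 / 2, 1, by norm_num, by norm_num⟩
  have hb : HasCompactSupport fun ξ ↦ (b ξ : ℂ) := b.hasCompactSupport.comp_left Complex.ofReal_zero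
  let ψ : 𝓢(V, ℂ) := hb.toSchwartzMap (Complex.ofRealCLM.contDiff.comp b.contDiff)
  refine ⟨𝓕⁻ ψ, ?_, ?_⟩
  · have apply_zero : 𝓕⁻ ψ 0 = ((∫ ξ, b ξ : ℝ) : ℂ) := by
      rw [fourierInv_coe, Real.fourierInv_eq, ← integral_complex_ofReal]
      simp only [inner_zero_right, AddChar.map_zero_eq_one, one_smul]
      rfl
    rw [apply_zero]
    exact_mod_cast b.integral_pos.ne'
  · rw [← fourier_coe, FourierTransform.fourier_fourierInv_eq]
    exact fun ξ hξ ↦ b.support_eq ▸ (Complex.ofReal_ne_zero.1 hξ : ξ ∈ support b)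

variable (V) in
lemma exists_one_le_norm_support_fourier_subset {ε : ℝ} (hε : 0 < ε) :
    ∃ φ : 𝓢(V, ℂ), (∀ x ∈ ball 0 1, 1 ≤ ‖φ x‖) ∧ support (𝓕 ⇑φ) ⊆ ball 0 ε := by
  obtain ⟨φ, hφ₀, hφ⟩ := exists_apply_zero_ne_zero_support_fourier_subset V
  obtain ⟨κ, hκ, large_near_zero⟩ : ∃ κ > 0, ∀ x ∈ ball 0 κ, ‖φ 0‖ / 2 < ‖φ x‖ :=
    Metric.eventually_nhds_iff_ball.1 <| φ.continuous.norm.continuousAt.eventually_const_lt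
      (half_lt_self (norm_pos_iff.2 hφ₀))
  have hc : 0 < min κ ε := lt_min hκ hε
  let c : ℝˣ := Units.mk0 (min κ ε) hc.ne'
  refine ⟨(2 / φ 0) • affineRescale φ c 0, fun x hx ↦ ?_, ?_⟩
  · have hcx : (c : ℝ) • x ∈ ball (0 : V) κ := by
      rw [mem_ball_zero_iff] at hx ⊢
      rw [Units.val_mk0, norm_smul, Real.norm_of_nonneg hc.le]
      calc min κ ε * ‖x‖ < min κ ε * 1 := by gcongr
        _ ≤ κ := by simp
    have := large_near_zero _ hcx
    rw [smul_apply, affineRescale_apply, sub_zero, norm_smul, norm_div, RCLike.norm_ofNat,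
      div_mul_eq_mul_div, one_le_div (norm_pos_iff.2 hφ₀)]
    linarith
  · have hsupp : support (𝓕 ⇑(affineRescale φ c 0)) ⊆ ball 0 ε :=
      (support_fourier_affineRescale_subset hφ c 0).trans <| ball_subset_ball <| by
        simp [c, abs_of_pos hc]
    rw [← fourier_coe, FourierTransform.fourier_smul]
    exact (Function.support_const_smul_subset _ _).trans hsupp

variable (V) in
lemma exists_ball_cutoff {ε : ℝ} (hε : 0 < ε) (N : ℕ) :
    ∃ C > 0, ∀ r > 0, ∀ z : V, ∃ Φ : 𝓢(V, ℂ), (∀ x ∈ ball z r, 1 ≤ ‖Φ x‖) ∧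
      (∀ x, ‖Φ x‖ ^ 2 ≤ C * ballWeight N z r x) ∧ support (𝓕 ⇑Φ) ⊆ ball 0 (r⁻¹ * ε) := by
  obtain ⟨φ, hφ₁, hφ⟩ := exists_one_le_norm_support_fourier_subset V hε
  obtain ⟨C, hC, decay⟩ := exists_norm_sq_le_rpow_neg φ N
  refine ⟨C, hC, fun r hr z ↦ ?_⟩
  let c : ℝˣ := Units.mk0 r⁻¹ (inv_ne_zero hr.ne')
  have norm_rescaled (x : V) : ‖(c : ℝ) • (x - z)‖ = dist x z / r := by
    rw [Units.val_mk0, norm_smul, norm_inv, Real.norm_of_nonneg hr.le, ← dist_eq_norm,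
      inv_mul_eq_div]
  refine ⟨affineRescale φ c z, fun x hx ↦ hφ₁ ((c : ℝ) • (x - z)) ?_, fun x ↦ ?_, ?_⟩
  · rwa [mem_ball_zero_iff, norm_rescaled, div_lt_one hr, ← mem_ball]
  · rw [affineRescale_apply, ballWeight, ← norm_rescaled]
    exact decay _
  · simpa [c, abs_of_pos hr] using support_fourier_affineRescale_subset hφ c z

end Cutoff

section Localization

variable {V : Type*} [NormedAddCommGroup V] [InnerProductSpace ℝ V] [FiniteDimensional ℝ V]
  [MeasurableSpace V] [BorelSpace V]

lemma setIntegral_norm_sq_le_integral_norm_sq {s : Set V} (hs : MeasurableSet s) {f g : 𝓢(V, ℂ)}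
    (h : ∀ x ∈ s, ‖f x‖ ≤ ‖g x‖) : ∫ x in s, ‖f x‖ ^ 2 ≤ ∫ x, ‖g x‖ ^ 2 := calc
  _ ≤ ∫ x in s, ‖g x‖ ^ 2 := setIntegral_mono_on (integrable_norm_sq f).integrableOn
    (integrable_norm_sq g).integrableOn hs fun x hx ↦ by gcongr; exact h x hx
  _ ≤ ∫ x, ‖g x‖ ^ 2 := setIntegral_le_integral (integrable_norm_sq g) (by filter_upwards; simp)

lemma setIntegral_norm_sq_mul_mul_le {s : Set V} (hs : MeasurableSet s) {Φ : 𝓢(V, ℂ)}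
    (hΦ : ∀ x ∈ s, 1 ≤ ‖Φ x‖) (f : Fin 3 → 𝓢(V, ℂ)) :
    ∫ x in s, ‖f 0 x * f 1 x * f 2 x‖ ^ 2 ≤
      ∫ x, ‖schwartzMul Φ (f 0) x * schwartzMul Φ (f 1) x * schwartzMul Φ (f 2) x‖ ^ 2 := by
  refine setIntegral_norm_sq_le_integral_norm_sq hs
    (f := schwartzMul (schwartzMul (f 0) (f 1)) (f 2))
    (g := schwartzMul (schwartzMul (schwartzMul Φ (f 0)) (schwartzMul Φ (f 1)))
      (schwartzMul Φ (f 2))) fun x hx ↦ ?_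
  simp only [schwartzMul_apply, norm_mul]
  gcongr <;> exact le_mul_of_one_le_left (norm_nonneg _) (hΦ x hx)

lemma integral_norm_sq_schwartzMul_le {Φ : 𝓢(V, ℂ)} {W : V → ℝ} (hW : Measurable W)
    (hΦ : ∀ x, ‖Φ x‖ ^ 2 ≤ W x) {M : ℝ} (hM : ∀ x, W x ≤ M) (f : 𝓢(V, ℂ)) :
    ∫ x, ‖schwartzMul Φ f x‖ ^ 2 ≤ ∫ x, ‖f x‖ ^ 2 * W x := by
  have W_bound (x : V) : ‖W x‖ ≤ M := by
    rw [Real.norm_of_nonneg ((sq_nonneg _).trans (hΦ x))]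
    exact hM x
  refine integral_mono (integrable_norm_sq _) ((integrable_norm_sq f).mul_bdd
    hW.aestronglyMeasurable (Filter.Eventually.of_forall W_bound)) fun x ↦ ?_
  rw [schwartzMul_apply, norm_mul, mul_pow, mul_comm]
  gcongr
  exact hΦ x

end Localization

section TrilinearRestriction

lemma integral_norm_sq_schwartzMul_trilinear_le {R r s : ℝ} (hr : 1 ≤ r) (hs : 0 < s)
    (hsr : s ≤ r) {A : Fin 3 → Set ℝ} (hA : ∀ i, A i ⊆ Set.Icc (-R) R)
    (hsep : PairwiseSeparated s⁻¹ A) {f : Fin 3 → 𝓢(R3, ℂ)}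
    (hf : ∀ i, support (𝓕 ⇑(f i)) ⊆ momNbhd (A i) r) {Φ : 𝓢(R3, ℂ)}
    (hΦ : support (𝓕 ⇑Φ) ⊆ ball 0 (r⁻¹ * (1 / 4))) :
    ∫ x, ‖schwartzMul Φ (f 0) x * schwartzMul Φ (f 1) x * schwartzMul Φ (f 2) x‖ ^ 2 ≤
      768 * (1 + (R + 1) ^ 2) ^ 6 * s ^ 3 * (r⁻¹) ^ 6 *
        ∏ i, ∫ x, ‖schwartzMul Φ (f i) x‖ ^ 2 := by
  have hr₀ : 0 < r := by linarith
  have hr₁ : r⁻¹ ≤ 1 := inv_le_one_of_one_le₀ hr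
  let τ := r⁻¹ * (1 / 4)
  have hτ : τ ≤ 1 := show r⁻¹ * (1 / 4) ≤ 1 by linarith
  let d := s⁻¹ - 2 * τ
  let δ := r⁻¹ + 4 * (R + 1) ^ 2 * τ
  have hδ : δ = (1 + (R + 1) ^ 2) * r⁻¹ := by ring
  have hδ₀ : 0 ≤ δ := by rw [hδ]; positivity
  have hd : s⁻¹ / 2 ≤ d := by
    have : r⁻¹ ≤ s⁻¹ := by gcongr
    grind
  have hd₀ : 0 < d := lt_of_lt_of_le (by positivity) hd
  have hsupp (i : Fin 3) : support (𝓕 ⇑(schwartzMul Φ (f i))) ⊆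
      momentTube (thickening τ (A i)) δ := calc
    _ ⊆ support (𝓕 ⇑Φ) + support (𝓕 ⇑(f i)) := support_fourier_schwartzMul_subset _ _
    _ ⊆ ball 0 τ + momentTube (A i) r⁻¹ :=
      Set.add_subset_add hΦ ((hf i).trans (momNbhd_subset_momentTube (A i) hr₀.le))
    _ = momentTube (A i) r⁻¹ + ball 0 τ := add_comm _ _
    _ ⊆ momentTube (thickening τ (A i)) δ :=
      momentTube_add_ball_subset (hA i) _ hτ
  have volume_le := volume_sumFiber_momentTube_le (fun i ↦ isOpen_thickening.measurableSet)
    hd₀ (hsep.thickening τ) hδ₀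
  refine (integral_norm_sq_mul_mul_le (by positivity) volume_le hsupp).trans ?_
  gcongr
  calc 96 * δ ^ 6 / d ^ 3 ≤ 96 * δ ^ 6 / (s⁻¹ / 2) ^ 3 := by gcongr
    _ = 768 * (1 + (R + 1) ^ 2) ^ 6 * s ^ 3 * (r⁻¹) ^ 6 := by
      rw [hδ]
      field

lemma inv_pow_six_eq_mul_volume_ball_sq_inv {r : ℝ} (hr : 0 < r) (z : R3) :
    r⁻¹ ^ 6 = (4 * π / 3) ^ 2 * ((volume (ball z r)).toReal ^ 2)⁻¹ := by
  rw [EuclideanSpace.volume_ball_fin_three, ENNReal.toReal_mul, ENNReal.toReal_pow,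
    ENNReal.toReal_ofReal hr.le, ENNReal.toReal_ofReal (by positivity)]
  field

theorem trilinear_restriction_moment_general (R : ℝ) (N : ℕ) :
    ∃ C > (0 : ℝ), ∀ r : ℝ, 1 ≤ r → ∀ z : R3, ∃ W : R3 → ℝ,
      Measurable W ∧ (∀ x, 0 < W x) ∧ (∀ x ∈ ball z r, 1 ≤ W x) ∧
      (∀ x, W x ≤ C * (1 + infDist x (ball z r) / r) ^ (-(N : ℝ))) ∧
      ∀ s : ℝ, 0 < s → s ≤ r → ∀ A : Fin 3 → Set ℝ, (∀ i, A i ⊆ Set.Icc (-R) R) →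
        PairwiseSeparated s⁻¹ A → ∀ f : Fin 3 → 𝓢(R3, ℂ),
        (∀ i, support (𝓕 ⇑(f i)) ⊆ momNbhd (A i) r) →
        ∫ x in ball z r, ‖f 0 x * f 1 x * f 2 x‖ ^ 2 ≤
          C * s ^ 3 * ((volume (ball z r)).toReal ^ 2)⁻¹ *
            ∏ i : Fin 3, ∫ x, ‖f i x‖ ^ 2 * W x := by
  obtain ⟨C₀, hC₀, cutoff⟩ := exists_ball_cutoff R3 (by norm_num : (0 : ℝ) < 1 / 4) N
  let C₁ := 768 * (1 + (R + 1) ^ 2) ^ 6 * (4 * π / 3) ^ 2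
  have hC₁ : 0 ≤ C₁ := by positivity
  refine ⟨C₀ + C₁, by positivity, fun r hr z ↦ ?_⟩
  have hr₀ : 0 < r := by linarith
  obtain ⟨Φ, hΦ_ball, hΦ_weight, hΦ_supp⟩ := cutoff r hr₀ z
  let W (x : R3) : ℝ := C₀ * ballWeight N z r x
  have hW_meas : Measurable W := ((continuous_ballWeight N z hr₀).const_mul C₀).measurable
  have hW_pos (x : R3) : 0 < W x := mul_pos hC₀ (ballWeight_pos N z hr₀ x)
  have hW_le (x : R3) : W x ≤ C₀ := mul_le_of_le_one_right hC₀.le (ballWeight_le_one N z hr₀ x)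
  refine ⟨W, hW_meas, hW_pos, fun x hx ↦ (one_le_pow₀ (hΦ_ball x hx)).trans (hΦ_weight x),
    fun x ↦ ?_, fun s hs hsr A hA hsep f hf ↦ ?_⟩
  · exact mul_le_mul (by linarith) (ballWeight_le_infDist N z hr₀ x)
      (ballWeight_pos N z hr₀ x).le (by positivity)
  · have weight_le (i : Fin 3) : ∫ x, ‖schwartzMul Φ (f i) x‖ ^ 2 ≤ ∫ x, ‖f i x‖ ^ 2 * W x :=
      integral_norm_sq_schwartzMul_le hW_meas hΦ_weight hW_le (f i)
    calc ∫ x in ball z r, ‖f 0 x * f 1 x * f 2 x‖ ^ 2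
        ≤ ∫ x, ‖schwartzMul Φ (f 0) x * schwartzMul Φ (f 1) x * schwartzMul Φ (f 2) x‖ ^ 2 :=
          setIntegral_norm_sq_mul_mul_le measurableSet_ball hΦ_ball f
      _ ≤ 768 * (1 + (R + 1) ^ 2) ^ 6 * s ^ 3 * (r⁻¹) ^ 6 *
            ∏ i, ∫ x, ‖schwartzMul Φ (f i) x‖ ^ 2 :=
          integral_norm_sq_schwartzMul_trilinear_le hr hs hsr hA hsep hf hΦ_supp
      _ = C₁ * s ^ 3 * ((volume (ball z r)).toReal ^ 2)⁻¹ *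
            ∏ i, ∫ x, ‖schwartzMul Φ (f i) x‖ ^ 2 := by
          rw [inv_pow_six_eq_mul_volume_ball_sq_inv hr₀ z]
          ring
      _ ≤ (C₀ + C₁) * s ^ 3 * ((volume (ball z r)).toReal ^ 2)⁻¹ *
            ∏ i, ∫ x, ‖f i x‖ ^ 2 * W x := by
          gcongr ?_ * _ * _ * ∏ i, ?_
          · exact le_add_of_nonneg_left hC₀.le
          · exact weight_le _

end TrilinearRestriction

/-- **Proposition 2.15 (local trilinear restriction for the moment curve in ℝ³).** -/
theorem trilinear_restriction_moment :
    ∃ C > (0:ℝ), ∀ r : ℝ, 1 ≤ r → ∀ z : R3, ∃ W : R3 → ℝ,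
      Measurable W ∧ (∀ x, 0 < W x) ∧ (∀ x ∈ Metric.ball z r, 1 ≤ W x) ∧
      (∀ x, W x ≤ C * (1 + Metric.infDist x (Metric.ball z r) / r) ^ (-(100:ℝ))) ∧
      ∀ s : ℝ, 0 < s → 1 ≤ s → 10 * s ≤ r →
      ∀ a b : Fin 3 → ℝ, (∀ i, Set.Icc (a i) (b i) ⊆ Set.Icc (0:ℝ) 1) →
      (∀ i j, i ≠ j →
        ∀ t ∈ Set.Icc (a i) (b i), ∀ t' ∈ Set.Icc (a j) (b j), s⁻¹ ≤ |t - t'|) →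
      ∀ f : Fin 3 → SchwartzMap R3 ℂ,
      (∀ i, Function.support (𝓕 ⇑(f i)) ⊆ momNbhd (Set.Icc (a i) (b i)) r) →
      (∫ x in Metric.ball z r, ‖f 0 x * f 1 x * f 2 x‖ ^ 2) ≤
        C * s ^ 3 * (((volume (Metric.ball z r)).toReal) ^ 2)⁻¹ *
          ∏ i : Fin 3, ∫ x : R3, ‖f i x‖ ^ 2 * W x := by
  obtain ⟨C, hC, weight⟩ := trilinear_restriction_moment_general 1 100
  refine ⟨C, hC, fun r hr z ↦ ?_⟩
  obtain ⟨W, hW_meas, hW_pos, hW_ball, hW_decay, estimate⟩ := weight r hr z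
  refine ⟨W, hW_meas, hW_pos, hW_ball, mod_cast hW_decay, fun s hs _ hsr a b hab hsep ↦ ?_⟩
  exact estimate s hs (by linarith) _
    (fun i ↦ (hab i).trans (Set.Icc_subset_Icc_left (by norm_num))) fun i j ↦ hsep i j
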